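/- Let K be a strictly convex body in ℝⁿ and τ > 0. For every 0 < δ < min(1, τⁿ)·vol(K), the boundary of the convolution body K(δ,τ) = {x : vol(K ∩ (x + τK)) ≥ δ} is of class C¹; that is, at each boundary point of K(δ,τ) there is a unique supporting hyperplane, varying continuously. -/

import Mathlib

open MeasureTheory Set
open scoped Pointwise RealInnerProductSpace

/-!
Write `G x = vol (K ∩ (x + τK))`. By the Prékopa–Leindler inequality `G` is log-concave, so past a
supporting hyperplane of `{G ≥ δ}` at a point with `G x = δ` it drops below `δ` at a linear rate.
If there were two distinct unit normals at `x`, some direction `u` would cross one of the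
hyperplanes while `-u` crosses the other, so that `G (x + hu) + G (x - hu) - 2 G x ≤ -ch` for
small `h > 0`.

On the other hand this second difference is bounded below by minus the volume of the set of points
of `K ∩ (x + τK)` which a translation by `hu` or by `-hu` moves out of both bodies, and that volume
is `o(h)` because the two boundaries cross transversally. Indeed, by strict convexity a common
outer normal at `q` forces `x = (1 - τ)q`, where one of the two bodies contains the other and
`G x = min(1, τⁿ) vol K > δ`. Finally, normals that are unique vary continuously, by compactness of
the sphere.
-/

open Filter
open scoped ENNReal Topology

theorem rpow_mul_rpow_le_ofReal_mul_add {a b : ℝ} (ha : 0 < a) (hb : 0 < b) (hab : a + b = 1)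
    (p q : ℝ≥0∞) : p ^ a * q ^ b ≤ ENNReal.ofReal a * p + ENNReal.ofReal b * q := by
  rcases eq_or_ne p ∞ with rfl | hp
  · simp [ENNReal.mul_top, ha]
  rcases eq_or_ne q ∞ with rfl | hq
  · simp [ENNReal.mul_top, hb]
  lift p to NNReal using hp
  lift q to NNReal using hq
  have amgm := NNReal.geom_mean_le_arith_mean2_weighted a.toNNReal b.toNNReal p q
    (by rw [← Real.toNNReal_add ha.le hb.le, hab, Real.toNNReal_one])
  rw [Real.coe_toNNReal _ ha.le, Real.coe_toNNReal _ hb.le] at amgm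
  rw [← ENNReal.coe_rpow_of_nonneg _ ha.le, ← ENNReal.coe_rpow_of_nonneg _ hb.le]
  unfold ENNReal.ofReal
  exact_mod_cast amgm

theorem rpow_mul_rpow_self {a b : ℝ} (ha : 0 < a) (hb : 0 < b) (hab : a + b = 1) (p : ℝ≥0∞) :
    p ^ a * p ^ b = p := by
  rw [← ENNReal.rpow_add_of_nonneg _ _ ha.le hb.le, hab, ENNReal.rpow_one]

section PrekopaLeindler

-- `S + q` and `p + T`, with `p = max S` and `q = min T`, meet only at `p + q`.
theorem volume_add_volume_le_of_isCompact {S T : Set ℝ} (hS : IsCompact S) (hT : IsCompact T)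
    (hSne : S.Nonempty) (hTne : T.Nonempty) : volume S + volume T ≤ volume (S + T) := by
  obtain ⟨p, hpS, hp⟩ := hS.exists_isGreatest hSne
  obtain ⟨q, hqT, hq⟩ := hT.exists_isLeast hTne
  have aedisjoint : AEDisjoint volume (q +ᵥ S) (p +ᵥ T) := by
    refine measure_mono_null (t := {p + q}) ?_ (by simp)
    rintro _ ⟨⟨x, hx, rfl⟩, ⟨y, hy, hxy⟩⟩
    have hxp := hp hx
    have hqy := hq hy
    simp only [vadd_eq_add, mem_singleton_iff] at hxy ⊢
    linarith
  calc volume S + volume T = volume (q +ᵥ S) + volume (p +ᵥ T) := by simp only [measure_vadd]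
    _ = volume ((q +ᵥ S) ∪ (p +ᵥ T)) :=
      (measure_union₀ (hT.vadd p).measurableSet.nullMeasurableSet aedisjoint).symm
    _ ≤ volume (S + T) := measure_mono <| union_subset
      (by rintro _ ⟨x, hx, rfl⟩; exact ⟨x, hx, q, hqT, add_comm x q⟩)
      (by rintro _ ⟨y, hy, rfl⟩; exact ⟨p, hpS, y, hy, rfl⟩)

theorem volume_add_volume_le {A B : Set ℝ} (hA : MeasurableSet A) (hB : MeasurableSet B)
    (hAne : A.Nonempty) (hBne : B.Nonempty) : volume A + volume B ≤ volume (A + B) := by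
  obtain ⟨x₀, hx₀⟩ := hAne
  obtain ⟨y₀, hy₀⟩ := hBne
  rw [hA.measure_eq_iSup_isCompact, hB.measure_eq_iSup_isCompact]
  simp only [iSup_and']
  refine ENNReal.biSup_add_biSup_le' ⟨∅, by simp⟩ ⟨∅, by simp⟩ fun S hS T hT => ?_
  calc volume S + volume T ≤ volume (insert x₀ S) + volume (insert y₀ T) := by
        gcongr <;> exact subset_insert _ _
    _ ≤ volume (insert x₀ S + insert y₀ T) :=
      volume_add_volume_le_of_isCompact (hS.2.insert _) (hT.2.insert _) (insert_nonempty _ _)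
        (insert_nonempty _ _)
    _ ≤ volume (A + B) := measure_mono <|
      add_subset_add (insert_subset hx₀ hS.1) (insert_subset hy₀ hT.1)

theorem lintegral_eq_setLIntegral_measure_ofReal_lt {α : Type*} [MeasurableSpace α]
    (μ : Measure α) {f : α → ℝ≥0∞} (hf : Measurable f) (hfin : ∀ x, f x ≠ ∞) :
    ∫⁻ x, f x ∂μ = ∫⁻ t in Ioi (0 : ℝ), μ {x | ENNReal.ofReal t < f x} := by
  have layercake := lintegral_eq_lintegral_meas_lt μ (f := fun x => (f x).toReal)
    (Eventually.of_forall fun x => ENNReal.toReal_nonneg) hf.ennreal_toReal.aemeasurable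
  simp only [ENNReal.ofReal_toReal (hfin _)] at layercake
  rw [layercake]
  refine setLIntegral_congr_fun measurableSet_Ioi fun t ht => ?_
  simp only [ENNReal.ofReal_lt_iff_lt_toReal (le_of_lt ht) (hfin _)]

theorem tendsto_lintegral_min_natCast {α : Type*} [MeasurableSpace α] (μ : Measure α)
    {f : α → ℝ≥0∞} (hf : Measurable f) :
    Tendsto (fun N : ℕ => ∫⁻ x, min (f x) N ∂μ) atTop (𝓝 (∫⁻ x, f x ∂μ)) := by
  refine lintegral_tendsto_of_tendsto_of_monotone
    (fun N => (hf.min measurable_const).aemeasurable)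
    (Eventually.of_forall fun x i j hij => min_le_min_left _ (by exact_mod_cast hij))
    (Eventually.of_forall fun x => ?_)
  simpa using (tendsto_const_nhds (x := f x)).min ENNReal.tendsto_nat_nhds_top

section Real

variable {a b : ℝ} {f g h : ℝ → ℝ≥0∞}

theorem ofReal_mul_volume_lt_add_le (ha : 0 < a) (hb : 0 < b) (hab : a + b = 1)
    (hf : Measurable f) (hg : Measurable g) (hfgh : ∀ x y, f x ^ a * g y ^ b ≤ h (a * x + b * y))
    {s : ℝ≥0∞} (hfs : ∃ x, s < f x) (hgs : ∃ x, s < g x) :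
    ENNReal.ofReal a * volume {x | s < f x} + ENNReal.ofReal b * volume {x | s < g x} ≤
      volume {x | s < h x} := by
  have hfm : MeasurableSet (a • {x | s < f x}) :=
    (measurableSet_lt measurable_const hf).const_smul₀ a
  have hgm : MeasurableSet (b • {x | s < g x}) :=
    (measurableSet_lt measurable_const hg).const_smul₀ b
  calc ENNReal.ofReal a * volume {x | s < f x} + ENNReal.ofReal b * volume {x | s < g x}
      = volume (a • {x | s < f x}) + volume (b • {x | s < g x}) := by
        simp [Measure.addHaar_smul, abs_of_pos ha, abs_of_pos hb]
    _ ≤ volume (a • {x | s < f x} + b • {x | s < g x}) :=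
        volume_add_volume_le hfm hgm (Set.Nonempty.smul_set hfs) (Set.Nonempty.smul_set hgs)
    _ ≤ volume {x | s < h x} := measure_mono ?_
  rintro _ ⟨_, ⟨x, hx, rfl⟩, _, ⟨y, hy, rfl⟩, rfl⟩
  calc s = s ^ a * s ^ b := (rpow_mul_rpow_self ha hb hab s).symm
    _ < f x ^ a * g y ^ b :=
        ENNReal.mul_lt_mul (ENNReal.rpow_lt_rpow hx ha) (ENNReal.rpow_lt_rpow hy hb)
    _ ≤ h (a * x + b * y) := hfgh x y

theorem ofReal_mul_lintegral_add_le_of_iSup_eq_one (ha : 0 < a) (hb : 0 < b) (hab : a + b = 1)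
    (hf : Measurable f) (hg : Measurable g) (hh : Measurable h) (hf_sup : ⨆ x, f x = 1)
    (hg_sup : ⨆ x, g x = 1) (hfgh : ∀ x y, f x ^ a * g y ^ b ≤ h (a * x + b * y)) :
    ENNReal.ofReal a * (∫⁻ x, f x) + ENNReal.ofReal b * (∫⁻ x, g x) ≤ ∫⁻ x, h x := by
  have hf_le : ∀ x, f x ≤ 1 := fun x => hf_sup ▸ le_iSup f x
  have hg_le : ∀ x, g x ≤ 1 := fun x => hg_sup ▸ le_iSup g x
  have hmin : ∀ x y, f x ^ a * g y ^ b ≤ min (h (a * x + b * y)) 1 := fun x y =>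
    le_min (hfgh x y) <| mul_le_one' (ENNReal.rpow_le_one (hf_le x) ha.le)
      (ENNReal.rpow_le_one (hg_le y) hb.le)
  refine le_trans ?_ (lintegral_mono fun x => min_le_left (h x) 1)
  rw [lintegral_eq_setLIntegral_measure_ofReal_lt _ hf fun x => ((hf_le x).trans_lt (by simp)).ne,
    lintegral_eq_setLIntegral_measure_ofReal_lt _ hg fun x => ((hg_le x).trans_lt (by simp)).ne,
    lintegral_eq_setLIntegral_measure_ofReal_lt _ (hh.min measurable_const)
      fun x => ((min_le_right (h x) 1).trans_lt (by simp)).ne,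
    ← lintegral_const_mul' _ _ (by simp), ← lintegral_const_mul' _ _ (by simp)]
  refine (le_lintegral_add _ _).trans (setLIntegral_mono' measurableSet_Ioi fun t _ => ?_)
  rcases lt_or_ge (ENNReal.ofReal t) 1 with ht | ht
  · exact ofReal_mul_volume_lt_add_le ha hb hab hf hg hmin
      (lt_iSup_iff.1 (hf_sup ▸ ht)) (lt_iSup_iff.1 (hg_sup ▸ ht))
  · simp [((hf_le _).trans ht).not_gt, ((hg_le _).trans ht).not_gt]

theorem lintegral_rpow_mul_lintegral_rpow_le_of_iSup_ne_top (ha : 0 < a) (hb : 0 < b)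
    (hab : a + b = 1) (hf : Measurable f) (hg : Measurable g) (hh : Measurable h)
    (hf_sup : ⨆ x, f x ≠ ∞) (hg_sup : ⨆ x, g x ≠ ∞)
    (hfgh : ∀ x y, f x ^ a * g y ^ b ≤ h (a * x + b * y)) :
    (∫⁻ x, f x) ^ a * (∫⁻ x, g x) ^ b ≤ ∫⁻ x, h x := by
  set α := ⨆ x, f x with hα
  set β := ⨆ x, g x with hβ
  rcases eq_or_ne α 0 with hα₀ | hα₀
  · have hf₀ : ∀ x, f x = 0 := by simpa [hα] using hα₀
    simp [hf₀, ha]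
  rcases eq_or_ne β 0 with hβ₀ | hβ₀
  · have hg₀ : ∀ x, g x = 0 := by simpa [hβ] using hβ₀
    simp [hg₀, hb]
  set c := α⁻¹ ^ a * β⁻¹ ^ b with hc
  have hc₀ : c ≠ 0 := by simp [hc, ENNReal.rpow_eq_zero_iff, hα₀, hβ₀, hf_sup, hg_sup]
  have hc_top : c ≠ ∞ := ENNReal.mul_ne_top (by simp [ENNReal.rpow_eq_top_iff, hα₀, hf_sup])
    (by simp [ENNReal.rpow_eq_top_iff, hβ₀, hg_sup])
  have rpow_mul_rpow (p q : ℝ≥0∞) : (α⁻¹ * p) ^ a * (β⁻¹ * q) ^ b = c * (p ^ a * q ^ b) := by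
    rw [ENNReal.mul_rpow_of_nonneg _ _ ha.le, ENNReal.mul_rpow_of_nonneg _ _ hb.le,
      mul_mul_mul_comm]
  have normalised := ofReal_mul_lintegral_add_le_of_iSup_eq_one ha hb hab
    (hf.const_mul α⁻¹) (hg.const_mul β⁻¹) (hh.const_mul c)
    (by rw [← ENNReal.mul_iSup, ENNReal.inv_mul_cancel hα₀ hf_sup])
    (by rw [← ENNReal.mul_iSup, ENNReal.inv_mul_cancel hβ₀ hg_sup])
    (fun x y => (rpow_mul_rpow _ _).trans_le (mul_le_mul_right (hfgh x y) c))
  have scaled := (rpow_mul_rpow_le_ofReal_mul_add ha hb hab _ _).trans normalised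
  rw [lintegral_const_mul _ hf, lintegral_const_mul _ hg, lintegral_const_mul _ hh,
    rpow_mul_rpow] at scaled
  exact (ENNReal.mul_le_mul_iff_right hc₀ hc_top).1 scaled

end Real

/-- The measure `μ` satisfies the Prékopa–Leindler inequality. Isolating this as a property of
measures lets it be transported along products, linear maps and scalings. -/
def PrekopaLeindler {E : Type*} [AddCommGroup E] [Module ℝ E] [MeasurableSpace E]
    (μ : Measure E) : Prop :=
  ∀ ⦃a b : ℝ⦄, 0 < a → 0 < b → a + b = 1 → ∀ ⦃f g h : E → ℝ≥0∞⦄,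
    Measurable f → Measurable g → Measurable h →
    (∀ x y, f x ^ a * g y ^ b ≤ h (a • x + b • y)) →
    (∫⁻ x, f x ∂μ) ^ a * (∫⁻ x, g x ∂μ) ^ b ≤ ∫⁻ x, h x ∂μ

theorem prekopaLeindler_volume_real : PrekopaLeindler (volume : Measure ℝ) := by
  intro a b ha hb hab f g h hf hg hh hfgh
  rcases eq_or_ne (∫⁻ x, f x) 0 with hf₀ | hf₀
  · simp [hf₀, ha]
  rcases eq_or_ne (∫⁻ x, g x) 0 with hg₀ | hg₀
  · simp [hg₀, hb]
  have lim := ENNReal.Tendsto.mul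
    ((ENNReal.continuous_rpow_const (y := a)).tendsto _ |>.comp
      (tendsto_lintegral_min_natCast volume hf))
    (Or.inl (by simp [ENNReal.rpow_eq_zero_iff, hf₀, ha, ha.le.not_gt]))
    ((ENNReal.continuous_rpow_const (y := b)).tendsto _ |>.comp
      (tendsto_lintegral_min_natCast volume hg))
    (Or.inl (by simp [ENNReal.rpow_eq_zero_iff, hg₀, hb, hb.le.not_gt]))
  have iSup_min_ne_top (k : ℝ → ℝ≥0∞) (N : ℕ) : ⨆ x, min (k x) N ≠ ∞ :=
    ((iSup_le fun x => min_le_right _ _).trans_lt (ENNReal.natCast_lt_top N)).ne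
  refine le_of_tendsto' lim fun N => lintegral_rpow_mul_lintegral_rpow_le_of_iSup_ne_top ha hb hab
    (hf.min measurable_const) (hg.min measurable_const) hh (iSup_min_ne_top f N)
    (iSup_min_ne_top g N) fun x y => le_trans ?_ (hfgh x y)
  gcongr <;> exact min_le_left _ _

theorem prekopaLeindler_volume_of_unique {E : Type*} [AddCommGroup E] [Module ℝ E] [Unique E]
    [MeasureSpace E] (hE : volume (univ : Set E) = 1) :
    PrekopaLeindler (volume : Measure E) := by
  intro a b _ _ _ f g h _ _ _ hfgh
  simpa [lintegral_unique, hE, Unique.eq_default] using hfgh default default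

section Transport

variable {E F : Type*} [AddCommGroup E] [Module ℝ E] [MeasurableSpace E]
  [AddCommGroup F] [Module ℝ F] [MeasurableSpace F] {μ : Measure E}

theorem PrekopaLeindler.prod {ν : Measure F} [SFinite ν] (hμ : PrekopaLeindler μ)
    (hν : PrekopaLeindler ν) : PrekopaLeindler (μ.prod ν) := by
  intro a b ha hb hab f g h hf hg hh hfgh
  rw [lintegral_prod f hf.aemeasurable, lintegral_prod g hg.aemeasurable,
    lintegral_prod h hh.aemeasurable]
  exact hμ ha hb hab hf.lintegral_prod_right' hg.lintegral_prod_right' hh.lintegral_prod_right'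
    fun s t => hν ha hb hab (hf.comp measurable_prodMk_left) (hg.comp measurable_prodMk_left)
      (hh.comp measurable_prodMk_left) fun x y => hfgh (s, x) (t, y)

theorem PrekopaLeindler.map (hμ : PrekopaLeindler μ) (φ : E →ₗ[ℝ] F) (hφ : Measurable φ) :
    PrekopaLeindler (μ.map φ) := by
  intro a b ha hb hab f g h hf hg hh hfgh
  rw [lintegral_map hf hφ, lintegral_map hg hφ, lintegral_map hh hφ]
  exact hμ ha hb hab (hf.comp hφ) (hg.comp hφ) (hh.comp hφ) fun x y => by
    simpa using hfgh (φ x) (φ y)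

theorem PrekopaLeindler.smul (hμ : PrekopaLeindler μ) (c : ℝ≥0∞) : PrekopaLeindler (c • μ) := by
  intro a b ha hb hab f g h hf hg hh hfgh
  simp only [lintegral_smul_measure, smul_eq_mul]
  calc (c * ∫⁻ x, f x ∂μ) ^ a * (c * ∫⁻ x, g x ∂μ) ^ b
      = (c ^ a * c ^ b) * ((∫⁻ x, f x ∂μ) ^ a * (∫⁻ x, g x ∂μ) ^ b) := by
        rw [ENNReal.mul_rpow_of_nonneg _ _ ha.le, ENNReal.mul_rpow_of_nonneg _ _ hb.le,
          mul_mul_mul_comm]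
    _ ≤ c * ∫⁻ x, h x ∂μ := by
        rw [rpow_mul_rpow_self ha hb hab]
        gcongr
        exact hμ ha hb hab hf hg hh hfgh

end Transport

theorem map_consLinearEquiv_volume_prod_volume (n : ℕ) :
    ((volume : Measure ℝ).prod (volume : Measure (Fin n → ℝ))).map
      (Fin.consLinearEquiv ℝ fun _ : Fin (n + 1) => ℝ) = volume := by
  rw [← (volume_preserving_piFinSuccAbove (fun _ : Fin (n + 1) => ℝ) 0).symm.map_eq,
    Measure.volume_eq_prod]
  congr 1
  ext p i
  exact congrFun (Fin.insertNth_zero' p.1 p.2).symm i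

theorem prekopaLeindler_volume_pi (n : ℕ) : PrekopaLeindler (volume : Measure (Fin n → ℝ)) := by
  induction n with
  | zero => exact prekopaLeindler_volume_of_unique (by simp [volume_pi])
  | succ n ih =>
    let cons := (Fin.consLinearEquiv ℝ fun _ : Fin (n + 1) => ℝ).toLinearMap
    rw [← map_consLinearEquiv_volume_prod_volume]
    exact (prekopaLeindler_volume_real.prod ih).map cons
      cons.continuous_of_finiteDimensional.measurable

variable {E : Type*} [NormedAddCommGroup E] [NormedSpace ℝ E] [FiniteDimensional ℝ E]
  [MeasurableSpace E] [BorelSpace E] (μ : Measure E) [μ.IsAddHaarMeasure]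

theorem prekopaLeindler : PrekopaLeindler μ := by
  let φ : (Fin (Module.finrank ℝ E) → ℝ) ≃L[ℝ] E := ContinuousLinearEquiv.ofFinrankEq (by simp)
  have := φ.isAddHaarMeasure_map volume
  rw [Measure.isAddLeftInvariant_eq_smul μ (volume.map φ)]
  exact ((prekopaLeindler_volume_pi _).map φ.toLinearEquiv.toLinearMap
    φ.continuous.measurable).smul _

theorem measure_rpow_mul_measure_rpow_le {a b : ℝ} (ha : 0 < a) (hb : 0 < b) (hab : a + b = 1)
    {A B C : Set E} (hA : MeasurableSet A) (hB : MeasurableSet B) (hC : MeasurableSet C)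
    (habC : ∀ x ∈ A, ∀ y ∈ B, a • x + b • y ∈ C) : μ A ^ a * μ B ^ b ≤ μ C := by
  rw [← lintegral_indicator_one hA, ← lintegral_indicator_one hB, ← lintegral_indicator_one hC]
  refine prekopaLeindler μ ha hb hab (measurable_one.indicator hA) (measurable_one.indicator hB)
    (measurable_one.indicator hC) fun x y => ?_
  by_cases hx : x ∈ A
  · by_cases hy : y ∈ B
    · simp [hx, hy, habC x hx y hy]
    · simp [hy, hb]
  · simp [hx, ha]

end PrekopaLeindler

section LogConcave

variable {E : Type*} [AddCommGroup E] [Module ℝ E]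

/-- Log-concavity of an extended nonnegative function, in multiplicative form so that the values
`0` and `∞` need no special treatment. -/
def LogConcave (G : E → ℝ≥0∞) : Prop :=
  ∀ ⦃a b : ℝ⦄, 0 < a → 0 < b → a + b = 1 → ∀ x y, G x ^ a * G y ^ b ≤ G (a • x + b • y)

theorem LogConcave.convex_superlevel {G : E → ℝ≥0∞} (hG : LogConcave G) (δ : ℝ≥0∞) :
    Convex ℝ {x | δ ≤ G x} := by
  refine convex_iff_forall_pos.2 fun x hx y hy a b ha hb hab => ?_
  calc δ = δ ^ a * δ ^ b := (rpow_mul_rpow_self ha hb hab δ).symm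
    _ ≤ G x ^ a * G y ^ b := mul_le_mul' (ENNReal.rpow_le_rpow hx ha.le)
      (ENNReal.rpow_le_rpow hy hb.le)
    _ ≤ G (a • x + b • y) := hG ha hb hab x y

theorem le_ofReal_mul_add_of_rpow_mul_rpow_le {p q δ : ℝ≥0∞} (hδ : δ ≠ 0) (hδq : δ < q) {t : ℝ}
    (ht₀ : 0 < t) (ht₁ : t < 1) (hpq : p ^ (1 / (1 + t)) * q ^ (t / (1 + t)) ≤ δ) :
    p ≤ ENNReal.ofReal (1 - t) * δ + ENNReal.ofReal t * (δ * (δ / q)) := by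
  have hδ_top : δ ≠ ∞ := hδq.ne_top
  have hpq' : p * q ^ t ≤ δ ^ (1 + t) := by
    have := ENNReal.rpow_le_rpow hpq (by linarith : 0 ≤ 1 + t)
    rwa [ENNReal.mul_rpow_of_nonneg _ _ (by linarith), ← ENNReal.rpow_mul, ← ENNReal.rpow_mul,
      div_mul_cancel₀ _ (by linarith), div_mul_cancel₀ _ (by linarith), ENNReal.rpow_one] at this
  calc p ≤ δ ^ (1 + t) / q ^ t :=
        (ENNReal.le_div_iff_mul_le (.inr <| by simp [ENNReal.rpow_eq_zero_iff, hδ, hδ_top])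
          (.inr <| by simp [ENNReal.rpow_eq_top_iff, hδ, hδ_top])).2 hpq'
    _ = δ ^ (1 - t) * (δ * (δ / q)) ^ t := by
        rw [ENNReal.mul_rpow_of_nonneg _ _ ht₀.le, ENNReal.div_rpow_of_nonneg _ _ ht₀.le,
          ← mul_assoc, ← ENNReal.rpow_add _ _ hδ hδ_top, ← mul_div_assoc,
          ← ENNReal.rpow_add _ _ hδ hδ_top, sub_add_cancel]
    _ ≤ ENNReal.ofReal (1 - t) * δ + ENNReal.ofReal t * (δ * (δ / q)) :=
        rpow_mul_rpow_le_ofReal_mul_add (by linarith) ht₀ (by ring) _ _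

-- If `f (u + κ • (y - x)) > 0`, the point between `x + h • u` and `y` with weights proportional
-- to `1` and `κ * h` lies beyond the supporting hyperplane, so `G < δ` there; log-concavity then
-- bounds `G (x + h • u)`.
theorem LogConcave.exists_eventually_add_le {G : E → ℝ≥0∞} (hG : LogConcave G) {δ : ℝ≥0∞}
    (hδ : δ ≠ 0) {x y u : E} (hy : δ < G y) {f : E →ₗ[ℝ] ℝ} (hf : ∀ z, δ ≤ G z → f z ≤ f x)
    (hu : 0 < f u) :
    ∃ c : ℝ≥0∞, c ≠ 0 ∧ ∀ᶠ h : ℝ in 𝓝[>] 0, G (x + h • u) + ENNReal.ofReal h * c ≤ δ := by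
  obtain ⟨κ, hκ, hκu⟩ := exists_pos_mul_lt hu (f x - f y)
  set m := δ * (δ / G y)
  have hmδ : m < δ := by
    simpa using ENNReal.mul_lt_mul_right hδ hy.ne_top
      ((ENNReal.div_lt_iff (.inr hδ) (.inr hy.ne_top)).2 (by simpa using hy) : δ / G y < 1)
  refine ⟨ENNReal.ofReal κ * (δ - m), mul_ne_zero (by simp [hκ]) (tsub_pos_of_lt hmδ).ne', ?_⟩
  have hsmall : ∀ᶠ h : ℝ in 𝓝[>] 0, κ * h < 1 := by
    have : Tendsto (fun h : ℝ => κ * h) (𝓝[>] 0) (𝓝 (κ * 0)) :=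
      (continuous_const_mul κ).continuousAt.tendsto.mono_left nhdsWithin_le_nhds
    exact this.eventually_lt_const (by simp)
  filter_upwards [hsmall, self_mem_nhdsWithin] with h hh₁ (hh₀ : 0 < h)
  set t := κ * h with ht
  have ht₀ : 0 < t := mul_pos hκ hh₀
  have beyond : f x < f ((1 / (1 + t)) • (x + h • u) + (t / (1 + t)) • y) := by
    simp only [map_add, map_smul, smul_eq_mul]
    field_simp
    rw [ht]
    nlinarith
  have hGxu : G (x + h • u) ≤ ENNReal.ofReal (1 - t) * δ + ENNReal.ofReal t * m :=
    le_ofReal_mul_add_of_rpow_mul_rpow_le hδ hy ht₀ hh₁ <|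
      (hG (by positivity) (by positivity) (by field_simp) _ _).trans
        (not_le.1 fun hle => beyond.not_ge (hf _ hle)).le
  calc G (x + h • u) + ENNReal.ofReal h * (ENNReal.ofReal κ * (δ - m))
      ≤ ENNReal.ofReal (1 - t) * δ + ENNReal.ofReal t * m + ENNReal.ofReal t * (δ - m) := by
        rw [← mul_assoc, ← ENNReal.ofReal_mul hh₀.le, mul_comm h κ, ← ht]
        gcongr
    _ = (ENNReal.ofReal (1 - t) + ENNReal.ofReal t) * δ := by
        rw [add_assoc, ← mul_add, add_tsub_cancel_of_le hmδ.le, add_mul]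
    _ = δ := by
        rw [← ENNReal.ofReal_add (by linarith) ht₀.le, sub_add_cancel, ENNReal.ofReal_one, one_mul]

end LogConcave

section CommonExit

variable {E : Type*} [AddCommGroup E]

/-- The points of `K ∩ L` that leave both `K` and `L` when translated by `v`. Their measure
controls how far the covariogram is from being midpoint convex. -/
def commonExit (K L : Set E) (v : E) : Set E := {y ∈ K ∩ L | y + v ∉ K ∪ L}

theorem mem_commonExit {K L : Set E} {v y : E} :
    y ∈ commonExit K L v ↔ y ∈ K ∩ L ∧ y + v ∉ K ∪ L := Iff.rfl

theorem measurableSet_commonExit [TopologicalSpace E] [ContinuousAdd E] [MeasurableSpace E]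
    [BorelSpace E] {K L : Set E} (hK : MeasurableSet K) (hL : MeasurableSet L) (v : E) :
    MeasurableSet (commonExit K L v) :=
  (hK.inter hL).inter ((continuous_add_const v).measurable (hK.union hL)).compl

theorem inter_union_neg_vadd_inter_subset (K L : Set E) (v : E) :
    (K ∩ L) ∪ (-v +ᵥ (K ∩ L)) ⊆ (((-v +ᵥ K) ∩ L) ∪ (K ∩ (-v +ᵥ L))) ∪
      (commonExit K L v ∪ (-v +ᵥ commonExit K L (-v))) := by
  intro y
  simp only [mem_commonExit, mem_union, mem_inter_iff, mem_vadd_set_iff_neg_vadd_mem, neg_neg,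
    vadd_eq_add, add_comm y v, add_neg_cancel_comm]
  tauto

end CommonExit

section Covariogram

variable {E : Type*} [NormedAddCommGroup E] [MeasurableSpace E] [BorelSpace E]
  (μ : Measure E) {K L : Set E}

/-- The (cross-)covariogram of `K` and `L`: the measure of `K ∩ (x + L)` as a function of the
translation `x`. The convolution bodies of `K` are its superlevel sets for `L = τ • K`. -/
noncomputable def covariogram (K L : Set E) (x : E) : ℝ≥0∞ := μ (K ∩ (x +ᵥ L))

variable {μ}

theorem continuous_covariogram [μ.IsAddLeftInvariant] [IsLocallyFiniteMeasure μ]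
    [μ.InnerRegularCompactLTTop] (hL : MeasurableSet L) (hμL : μ L ≠ ∞) :
    Continuous (covariogram μ K L) := by
  let translate : C(E, C(E, E)) := ContinuousMap.curry ⟨fun p => -p.1 + p.2, by fun_prop⟩
  have preimage_translate (x : E) : translate x ⁻¹' L = x +ᵥ L := by
    rw [← preimage_vadd_neg]; rfl
  have measurePreserving_translate (x : E) : MeasurePreserving (translate x) μ μ :=
    measurePreserving_add_left μ (-x)
  refine continuous_iff_continuousAt.2 fun x => ?_
  have symmDiff_tendsto :=
    tendsto_measure_symmDiff_preimage_nhds_zero (translate.continuous.tendsto x)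
      (Eventually.of_forall measurePreserving_translate) (measurePreserving_translate x)
      hL.nullMeasurableSet hμL
  simp only [preimage_translate] at symmDiff_tendsto
  have le_add_symmDiff (A B : Set E) : μ (K ∩ A) ≤ μ (K ∩ B) + μ (symmDiff A B) := by
    refine (measure_mono fun y hy => ?_).trans (measure_union_le _ _)
    by_cases hyB : y ∈ B
    · exact .inl ⟨hy.1, hyB⟩
    · exact .inr (.inl ⟨hy.2, hyB⟩)
  have hx : covariogram μ K L x ≠ ∞ :=
    ne_top_of_le_ne_top (by rwa [measure_vadd]) (measure_mono inter_subset_right)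
  refine (ENNReal.tendsto_nhds hx).2 fun ε hε => ?_
  filter_upwards [ENNReal.tendsto_nhds_zero.1 symmDiff_tendsto ε hε] with z hz
  refine ⟨tsub_le_iff_right.2 ?_, ?_⟩
  · refine (le_add_symmDiff (x +ᵥ L) (z +ᵥ L)).trans ?_
    rw [symmDiff_comm]
    exact add_le_add_right hz _
  · exact (le_add_symmDiff (z +ᵥ L) (x +ᵥ L)).trans (add_le_add_right hz _)

-- With `M = x +ᵥ L`, compare `K ∩ M` and its translate by `-v` with `(-v +ᵥ K) ∩ M` and
-- `K ∩ (-v +ᵥ M)`: both pairs have the same intersection, and their unions differ by common exits.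
theorem two_mul_covariogram_le [μ.IsAddLeftInvariant] (hK : MeasurableSet K)
    (hL : MeasurableSet L) (x v : E) :
    2 * covariogram μ K L x ≤ covariogram μ K L (x + v) + covariogram μ K L (x - v) +
      (μ (commonExit K (x +ᵥ L) v) + μ (commonExit K (x +ᵥ L) (-v))) := by
  set M := x +ᵥ L with hM
  have hMm : MeasurableSet M := hL.const_vadd x
  have cov_add : covariogram μ K L (x + v) = μ ((-v +ᵥ K) ∩ M) := by
    rw [covariogram, ← measure_vadd μ (-v), vadd_set_inter, vadd_vadd, hM,
      neg_add_cancel_comm_assoc]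
  have cov_sub : covariogram μ K L (x - v) = μ (K ∩ (-v +ᵥ M)) := by
    rw [covariogram, hM, vadd_vadd, neg_add_eq_sub]
  have inter_eq : (K ∩ M) ∩ (-v +ᵥ (K ∩ M)) = ((-v +ᵥ K) ∩ M) ∩ (K ∩ (-v +ᵥ M)) := by
    rw [vadd_set_inter]
    ac_rfl
  calc 2 * covariogram μ K L x = μ (K ∩ M) + μ (-v +ᵥ (K ∩ M)) := by
        rw [measure_vadd, two_mul, covariogram]
    _ = μ ((K ∩ M) ∪ (-v +ᵥ (K ∩ M))) + μ ((K ∩ M) ∩ (-v +ᵥ (K ∩ M))) :=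
        (measure_union_add_inter _ ((hK.inter hMm).const_vadd _)).symm
    _ ≤ μ (((-v +ᵥ K) ∩ M) ∪ (K ∩ (-v +ᵥ M))) +
          (μ (commonExit K M v) + μ (commonExit K M (-v))) +
          μ (((-v +ᵥ K) ∩ M) ∩ (K ∩ (-v +ᵥ M))) := by
        rw [inter_eq, ← measure_vadd μ (-v) (commonExit K M (-v))]
        gcongr
        exact (measure_mono (inter_union_neg_vadd_inter_subset K M v)).trans <|
          (measure_union_le _ _).trans (add_le_add_right (measure_union_le _ _) _)
    _ = covariogram μ K L (x + v) + covariogram μ K L (x - v) +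
          (μ (commonExit K M v) + μ (commonExit K M (-v))) := by
        rw [cov_add, cov_sub, add_right_comm,
          measure_union_add_inter _ (hK.inter (hMm.const_vadd _))]

variable [NormedSpace ℝ E] [FiniteDimensional ℝ E]

theorem logConcave_covariogram [μ.IsAddHaarMeasure] (hK : MeasurableSet K) (hL : MeasurableSet L)
    (hKc : Convex ℝ K) (hLc : Convex ℝ L) : LogConcave (covariogram μ K L) := by
  intro a b ha hb hab x y
  refine measure_rpow_mul_measure_rpow_le μ ha hb hab (hK.inter (hL.const_vadd x))
    (hK.inter (hL.const_vadd y)) (hK.inter (hL.const_vadd _)) ?_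
  rintro _ ⟨hpK, p, hp, rfl⟩ _ ⟨hqK, q, hq, rfl⟩
  refine ⟨hKc hpK hqK ha.le hb.le hab, a • p + b • q, hLc hp hq ha.le hb.le hab, ?_⟩
  simp only [vadd_eq_add, smul_add]
  abel

theorem min_one_pow_mul_measure_le_covariogram [μ.IsAddHaarMeasure] (hK : Convex ℝ K) {τ : ℝ}
    (hτ : 0 < τ) {k : E} (hk : k ∈ K) :
    ENNReal.ofReal (min 1 (τ ^ Module.finrank ℝ E)) * μ K ≤
      covariogram μ K (τ • K) ((1 - τ) • k) := by
  rcases le_total τ 1 with hτ₁ | hτ₁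
  · have copy_subset : (1 - τ) • k +ᵥ τ • K ⊆ K := by
      rintro _ ⟨_, ⟨z, hz, rfl⟩, rfl⟩
      exact hK hk hz (by linarith) hτ.le (by ring)
    rw [covariogram, inter_eq_self_of_subset_right copy_subset, measure_vadd,
      Measure.addHaar_smul, abs_of_pos (by positivity)]
    gcongr
    exact min_le_right _ _
  · have subset_copy : K ⊆ (1 - τ) • k +ᵥ τ • K := by
      intro z hz
      refine ⟨_, ⟨_, hK hz hk (a := τ⁻¹) (b := 1 - τ⁻¹) (by positivity)
        (by linarith [inv_le_one_of_one_le₀ hτ₁]) (by ring), rfl⟩, ?_⟩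
      simp only [vadd_eq_add]
      match_scalars <;> field_simp
      ring
    rw [covariogram, inter_eq_self_of_subset_left subset_copy]
    calc _ ≤ ENNReal.ofReal 1 * μ K := by gcongr; exact min_le_left _ _
      _ = μ K := by simp

end Covariogram

section CommonExitMeasure

variable {E : Type*} [NormedAddCommGroup E]

theorem cthickening_add_subset {Q S : Set E} (hQ : IsCompact Q)
    (hS : IsCompact S) {η : ℝ} (hη : 0 ≤ η) :
    Metric.cthickening η Q + S ⊆ Metric.cthickening η (Q + S) := by
  rw [← (hQ.add hS).add_closedBall_zero hη, ← hQ.add_closedBall_zero hη, add_right_comm]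

variable [NormedSpace ℝ E]

theorem eventually_commonExit_inter_subset_cthickening {K L C : Set E} (hK : IsClosed K)
    (hL : IsClosed L) (hC : IsCompact C) (u : E) {η : ℝ} (hη : 0 < η) :
    ∀ᶠ h : ℝ in 𝓝[>] 0, commonExit K L (h • u) ∩ C ⊆
      Metric.cthickening η (frontier K ∩ frontier L ∩ C) := by
  set Q := frontier K ∩ frontier L ∩ C
  have far_compact : IsCompact ((C ∩ (K ∩ L)) \ Metric.thickening η Q) :=
    (hC.inter_right (hK.inter hL)).diff Metric.isOpen_thickening
  have far_stay : ∀ᶠ h : ℝ in 𝓝 0, ∀ y ∈ (C ∩ (K ∩ L)) \ Metric.thickening η Q,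
      y + h • u ∈ interior K ∪ interior L := by
    refine far_compact.eventually_forall_of_forall_eventually fun y ⟨⟨hyC, hyK, hyL⟩, hyQ⟩ => ?_
    have hy : y ∈ interior K ∪ interior L := by
      by_contra hy
      rw [mem_union, not_or] at hy
      exact hyQ (Metric.self_subset_thickening hη _
        ⟨⟨⟨subset_closure hyK, hy.1⟩, ⟨subset_closure hyL, hy.2⟩⟩, hyC⟩)
    have htranslate : Tendsto (fun p : ℝ × E => p.2 + p.1 • u) (𝓝 (0, y)) (𝓝 y) :=
      Continuous.tendsto' (by fun_prop) _ _ (by simp)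
    exact htranslate ((isOpen_interior.union isOpen_interior).mem_nhds hy)
  filter_upwards [nhdsWithin_le_nhds far_stay] with h hstay y ⟨hy, hyC⟩
  by_contra hyQ
  exact hy.2 (union_subset_union interior_subset interior_subset
    (hstay y ⟨⟨hyC, hy.1⟩, fun hyt => hyQ (Metric.thickening_subset_cthickening _ _ hyt)⟩))

theorem add_smul_notMem_of_convex {L : Set E} (hL : Convex ℝ L) {y v : E} {h t : ℝ}
    (hh : 0 < h) (ht : h ≤ t) (hy : y ∈ L) (hyv : y + h • v ∉ L) : y + t • v ∉ L := by
  intro hyt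
  have ht₀ : 0 < t := hh.trans_le ht
  refine hyv ?_
  simpa [smul_smul, ht₀.ne'] using
    hL.add_smul_mem hy hyt (t := h / t) ⟨by positivity, (div_le_one ht₀).2 ht⟩

-- The translates of `A` by `0, h • v, (2 * h) • v, …` are disjoint, and more than `1 / h` of them
-- lie in `A + segment ℝ 0 v`.
theorem measure_le_ofReal_mul_measure_add_segment [MeasurableSpace E] [BorelSpace E]
    (μ : Measure E) [μ.IsAddLeftInvariant] {A : Set E} (hA : MeasurableSet A) {v : E} {h : ℝ}
    (hh : 0 < h) (hstay : ∀ y ∈ A, ∀ t ≥ h, y + t • v ∉ A) :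
    μ A ≤ ENNReal.ofReal h * μ (A + segment ℝ 0 v) := by
  let translate (j : ℕ) : Set E := (j * h) • v +ᵥ A
  have disjoint_translate : Pairwise (Function.onFun Disjoint translate) := by
    refine (pairwise_disjoint_on _).2 fun i j hij => disjoint_left.2 ?_
    rintro _ ⟨y, hy, rfl⟩ ⟨z, hz, hzy⟩
    refine hstay z hz ((j - i) * h) (le_mul_of_one_le_left hh.le ?_) ?_
    · exact_mod_cast le_sub_iff_add_le'.2 (by exact_mod_cast hij : (i : ℝ) + 1 ≤ j)
    · have hzy' : (j * h) • v + z = (i * h) • v + y := hzy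
      have hzij : z + ((j - i) * h) • v = y :=
        add_left_cancel (a := (i * h) • v) (by rw [← hzy']; module)
      exact hzij ▸ hy
  set J := ⌊1 / h⌋₊
  have translate_subset : ∀ j ∈ Finset.range (J + 1), translate j ⊆ A + segment ℝ 0 v := by
    rintro j hj _ ⟨y, hy, rfl⟩
    have hj_le : (j : ℝ) ≤ 1 / h :=
      (Nat.cast_le.2 (Finset.mem_range_succ_iff.1 hj)).trans (Nat.floor_le (by positivity))
    rw [segment_eq_image']
    exact ⟨y, hy, _, ⟨j * h, ⟨by positivity, (le_div_iff₀ hh).1 hj_le⟩, rfl⟩, by simp [add_comm]⟩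
  have one_le : 1 ≤ ENNReal.ofReal h * ((J + 1 : ℕ) : ℝ≥0∞) := by
    rw [← ENNReal.ofReal_natCast, ← ENNReal.ofReal_mul hh.le, ENNReal.one_le_ofReal, mul_comm]
    exact_mod_cast ((div_lt_iff₀ hh).1 (Nat.lt_floor_add_one (1 / h))).le
  calc μ A ≤ ENNReal.ofReal h * ((J + 1 : ℕ) : ℝ≥0∞) * μ A := le_mul_of_one_le_left' one_le
    _ = ENNReal.ofReal h * ∑ j ∈ Finset.range (J + 1), μ (translate j) := by
        simp [translate, measure_vadd, mul_assoc]
    _ = ENNReal.ofReal h * μ (⋃ j ∈ Finset.range (J + 1), translate j) := by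
        rw [measure_biUnion_finset (fun i _ j _ hij => disjoint_translate hij)
          fun j _ => hA.const_vadd _]
    _ ≤ ENNReal.ofReal h * μ (A + segment ℝ 0 v) := by
        gcongr
        exact iUnion₂_subset translate_subset

theorem isCompact_segment (x y : E) : IsCompact (segment ℝ x y) := by
  rw [segment_eq_image']
  exact isCompact_Icc.image (by fun_prop)

variable {K L : Set E} {u : E} [MeasurableSpace E] (μ : Measure E)

/-- The points of `C` that leave both `K` and `L` when translated by `h • u` form a set of measure
`o(h)` as `h → 0⁺`. -/
def NegligibleCommonExit (K L : Set E) (u : E) (C : Set E) : Prop :=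
  ∀ ε : ℝ≥0∞, ε ≠ 0 → ∀ᶠ h : ℝ in 𝓝[>] 0, μ (commonExit K L (h • u) ∩ C) ≤ ENNReal.ofReal h * ε

variable {μ}

theorem NegligibleCommonExit.mono {C D : Set E} (hD : NegligibleCommonExit μ K L u D)
    (hCD : C ⊆ D) :
    NegligibleCommonExit μ K L u C := fun ε hε => by
  filter_upwards [hD ε hε] with h hh
  exact (measure_mono (inter_subset_inter_right _ hCD)).trans hh

theorem NegligibleCommonExit.union {C D : Set E} (hC : NegligibleCommonExit μ K L u C)
    (hD : NegligibleCommonExit μ K L u D) : NegligibleCommonExit μ K L u (C ∪ D) := fun ε hε => by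
  have hε₂ : ε / 2 ≠ 0 := by simpa using hε
  filter_upwards [hC _ hε₂, hD _ hε₂] with h hhC hhD
  rw [inter_union_distrib_left]
  refine (measure_union_le _ _).trans ((add_le_add hhC hhD).trans_eq ?_)
  rw [← mul_add, ENNReal.add_halves]

variable [BorelSpace E] [FiniteDimensional ℝ E] [μ.IsAddHaarMeasure]

theorem negligibleCommonExit_of_measure_add_segment_eq_zero (hK : IsClosed K) (hL : IsClosed L)
    (hLc : Convex ℝ L) {C : Set E} (hC : IsCompact C) {v : E}
    (hexit : ∀ᶠ h : ℝ in 𝓝[>] 0, ∀ y ∈ C, y + h • v ∈ L → y + h • u ∈ L)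
    (hnull : μ (frontier K ∩ frontier L ∩ C + segment ℝ 0 v) = 0) :
    NegligibleCommonExit μ K L u C := by
  intro ε hε
  set Q := frontier K ∩ frontier L ∩ C
  have hQ : IsCompact Q := hC.inter_left (isClosed_frontier.inter isClosed_frontier)
  have hthick := tendsto_measure_cthickening_of_isCompact (μ := μ)
    (hQ.add (isCompact_segment 0 v))
  rw [hnull] at hthick
  obtain ⟨η, hηε, hη⟩ : ∃ η : ℝ, μ (Metric.cthickening η (Q + segment ℝ 0 v)) < ε ∧ 0 < η :=
    ((hthick.mono_left (nhdsWithin_le_nhds (s := Ioi 0))).eventually_lt_const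
      (pos_iff_ne_zero.2 hε) |>.and self_mem_nhdsWithin).exists
  filter_upwards [hexit, eventually_commonExit_inter_subset_cthickening hK hL hC u hη,
    self_mem_nhdsWithin] with h hh_exit hh_near (hh : 0 < h)
  have hstay : ∀ y ∈ commonExit K L (h • u) ∩ C, ∀ t ≥ h, y + t • v ∉ commonExit K L (h • u) ∩ C :=
    fun y hy t ht hyt => add_smul_notMem_of_convex hLc hh ht hy.1.1.2
      (fun hyL => hy.1.2 (.inr (hh_exit y hy.2 hyL))) hyt.1.1.2
  calc μ (commonExit K L (h • u) ∩ C)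
      ≤ ENNReal.ofReal h * μ (commonExit K L (h • u) ∩ C + segment ℝ 0 v) :=
        measure_le_ofReal_mul_measure_add_segment μ
          ((measurableSet_commonExit hK.measurableSet hL.measurableSet _).inter hC.measurableSet)
          hh hstay
    _ ≤ ENNReal.ofReal h * ε := by
        gcongr
        exact (measure_mono ((add_subset_add_right hh_near).trans
          (cthickening_add_subset hQ (isCompact_segment 0 v) hη.le))).trans hηε.le

end CommonExitMeasure

section Transversality

variable {E : Type*} [NormedAddCommGroup E] [NormedSpace ℝ E] {K L : Set E} {q u : E}

/-- The boundaries of `K` and `L` cross transversally at `q`: some direction `w` points into `K`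
and its opposite into `L`. For convex bodies this says that `K` and `L` have no common outer normal
at `q`. -/
def TransverseAt (K L : Set E) (q : E) : Prop := ∃ w, q + w ∈ interior K ∧ q - w ∈ interior L

-- As soon as `L` contains `q - w + s • u`, the point `y + h • u` lies between `y + h • (c • w)` and
-- a point near `q - w + s • u`, where `c = s⁻¹`.
theorem exists_mem_nhds_eventually_add_smul_mem (hL : Convex ℝ L) {w : E}
    (hw : q - w ∈ interior L) (u : E) :
    ∃ c : ℝ, ∃ U ∈ 𝓝 q, ∀ᶠ h : ℝ in 𝓝[>] 0, ∀ y ∈ U, y + h • c • w ∈ L → y + h • u ∈ L := by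
  obtain ⟨s, hs, hs₀⟩ : ∃ s : ℝ, q - w + s • u ∈ interior L ∧ 0 < s := by
    have htend : Tendsto (fun s : ℝ => q - w + s • u) (𝓝[>] 0) (𝓝 (q - w)) :=
      (Continuous.tendsto' (by fun_prop) _ _ (by simp)).mono_left nhdsWithin_le_nhds
    exact ((htend.eventually_mem (isOpen_interior.mem_nhds hw)).and self_mem_nhdsWithin).exists
  have hnear : ∀ᶠ p : ℝ × E in 𝓝 (0, q), p.2 + p.1 • s⁻¹ • w - w + s • u ∈ L ∧ p.1 * s⁻¹ < 1 := by
    have htend : Tendsto (fun p : ℝ × E => p.2 + p.1 • s⁻¹ • w - w + s • u) (𝓝 (0, q))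
        (𝓝 (q - w + s • u)) := Continuous.tendsto' (by fun_prop) _ _ (by simp)
    have hsmall : Tendsto (fun p : ℝ × E => p.1 * s⁻¹) (𝓝 (0, q)) (𝓝 0) :=
      Continuous.tendsto' (by fun_prop) _ _ (by simp)
    exact (htend.eventually_mem (mem_interior_iff_mem_nhds.1 hs)).and
      (hsmall.eventually_lt_const one_pos)
  rw [nhds_prod_eq, eventually_prod_iff] at hnear
  obtain ⟨smallEnough, hsmallEnough, nearEnough, hnearEnough, hnear⟩ := hnear
  refine ⟨s⁻¹, {y | nearEnough y}, hnearEnough, ?_⟩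
  filter_upwards [nhdsWithin_le_nhds hsmallEnough, self_mem_nhdsWithin] with h hh (hh₀ : 0 < h)
    y hy hyL
  obtain ⟨hyw, hhs⟩ := hnear hh hy
  convert hL.add_smul_sub_mem hyL hyw (t := h * s⁻¹) ⟨by positivity, hhs.le⟩ using 1
  match_scalars <;> field_simp <;> ring

theorem mem_of_sub_mem_of_add_smul_mem (hL : Convex ℝ L) {w : E} {e : ℝ} (he : 0 ≤ e)
    (hw : q - w ∈ L) (hew : q + e • w ∈ L) : q ∈ L := by
  convert hL hw hew (a := e / (1 + e)) (b := 1 / (1 + e)) (by positivity) (by positivity)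
    (by field_simp; ring) using 1
  match_scalars <;> field_simp <;> ring

theorem add_smul_notMem_interior_inter (hK : Convex ℝ K) (hL : Convex ℝ L)
    (hqK : q ∈ frontier K) (hqL : q ∈ frontier L) {w : E} (hwK : q + w ∈ interior K)
    (hwL : q - w ∈ interior L) (e : ℝ) : q + e • w ∉ interior (K ∩ L) := by
  rw [interior_inter]
  rintro ⟨heK, heL⟩
  rcases le_total 0 e with he | he
  · exact hqL.2 (mem_of_sub_mem_of_add_smul_mem hL.interior he hwL heL)
  · exact hqK.2 (mem_of_sub_mem_of_add_smul_mem hK.interior (neg_nonneg.2 he) (w := -w)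
      (by simpa using hwK) (by simpa using heK))

variable [FiniteDimensional ℝ E] [MeasurableSpace E] [BorelSpace E] (μ : Measure E)
  [μ.IsAddHaarMeasure]

-- The whole cylinder `Q + ℝ w` lies in the boundary of the convex set `interior (K ∩ L) + ℝ w`.
theorem measure_add_span_eq_zero (hK : Convex ℝ K) (hL : Convex ℝ L)
    (hKL : (interior (K ∩ L)).Nonempty) {Q : Set E} {w : E} (hQ : Q ⊆ K ∩ L)
    (hQf : Q ⊆ frontier K ∩ frontier L) (hwK : ∀ q ∈ Q, q + w ∈ interior K)
    (hwL : ∀ q ∈ Q, q - w ∈ interior L) :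
    μ (Q + (Submodule.span ℝ {w} : Set E)) = 0 := by
  have hconvex : Convex ℝ (interior (K ∩ L) + (Submodule.span ℝ {w} : Set E)) :=
    (hK.inter hL).interior.add (Submodule.convex _)
  refine measure_mono_null ?_ (hconvex.addHaar_frontier μ)
  rintro _ ⟨q, hq, z, hz, rfl⟩
  refine ⟨?_, ?_⟩
  · have hq_closure : q ∈ closure (interior (K ∩ L)) := by
      rw [(hK.inter hL).closure_interior_eq_closure_of_nonempty_interior hKL]
      exact subset_closure (hQ hq)
    exact map_mem_closure (f := (· + z)) (by fun_prop) hq_closure fun y hy => add_mem_add hy hz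
  · rw [isOpen_interior.add_right.interior_eq]
    rintro ⟨m, hm, z', hz', hmz⟩
    obtain ⟨e, he⟩ := Submodule.mem_span_singleton.1 (sub_mem hz hz')
    have hme : q + e • w = m := by
      rw [he, ← add_sub_assoc]
      exact sub_eq_of_eq_add hmz.symm
    exact add_smul_notMem_interior_inter hK hL (hQf hq).1 (hQf hq).2 (hwK q hq) (hwL q hq) e
      (hme ▸ hm)

variable {μ}

theorem exists_mem_nhds_negligibleCommonExit (hK : IsClosed K) (hL : IsClosed L)
    (hKc : Convex ℝ K) (hLc : Convex ℝ L) (hKL : (interior (K ∩ L)).Nonempty)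
    (hq : q ∈ frontier K ∩ frontier L → TransverseAt K L q) (u : E) :
    ∃ U ∈ 𝓝 q, NegligibleCommonExit μ K L u U := by
  by_cases hqf : q ∈ frontier K ∩ frontier L
  · obtain ⟨w, hwK, hwL⟩ := hq hqf
    obtain ⟨c, U, hU, hexit⟩ := exists_mem_nhds_eventually_add_smul_mem hLc hwL u
    have hU' : ∀ᶠ y in 𝓝 q, y ∈ U ∧ y + w ∈ interior K ∧ y - w ∈ interior L :=
      .and hU <| .and ((continuous_add_const w).continuousAt (isOpen_interior.mem_nhds hwK))
        ((continuous_sub_right w).continuousAt (isOpen_interior.mem_nhds hwL))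
    obtain ⟨C, hCq, hCU, hC⟩ := local_compact_nhds hU'
    refine ⟨C, hCq, negligibleCommonExit_of_measure_add_segment_eq_zero (v := c • w) hK hL hLc hC
      (hexit.mono fun h hh y hy => hh y (hCU hy).1) ?_⟩
    refine measure_mono_null (add_subset_add_left ?_) (measure_add_span_eq_zero μ (w := w)
      hKc hLc hKL (fun y hy => ⟨hK.frontier_subset hy.1.1, hL.frontier_subset hy.1.2⟩)
      inter_subset_left (fun y hy => (hCU hy.2).2.1) fun y hy => (hCU hy.2).2.2)
    exact (Submodule.convex _).segment_subset (zero_mem _)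
      (Submodule.smul_mem _ _ (Submodule.mem_span_singleton_self w))
  · obtain ⟨C, hCq, hCf, hC⟩ := local_compact_nhds
      ((isClosed_frontier.inter isClosed_frontier).isOpen_compl.mem_nhds hqf)
    refine ⟨C, hCq, negligibleCommonExit_of_measure_add_segment_eq_zero hK hL hLc hC
      (.of_forall fun h y _ hy => hy) ?_⟩
    simp [(disjoint_left.2 fun _ hy hyC => hCf hyC hy :
      Disjoint (frontier K ∩ frontier L) C).inter_eq]

theorem negligibleCommonExit_of_transverseAt (hK : IsCompact K) (hL : IsClosed L)
    (hKc : Convex ℝ K) (hLc : Convex ℝ L) (hKL : (interior (K ∩ L)).Nonempty)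
    (hq : ∀ q ∈ frontier K ∩ frontier L, TransverseAt K L q) (u : E) :
    NegligibleCommonExit μ K L u K := by
  refine hK.induction_on (p := NegligibleCommonExit μ K L u) (fun ε _ => by simp)
    (fun C D hCD hD => hD.mono hCD) (fun C D hC hD => hC.union hD) fun q _ => ?_
  obtain ⟨U, hU, hUu⟩ := exists_mem_nhds_negligibleCommonExit (μ := μ) hK.isClosed hL hKc hLc hKL
    (hq q) u
  exact ⟨U, mem_nhdsWithin_of_mem_nhds hU, hUu⟩

end Transversality

section CommonSupport

variable {E : Type*} [NormedAddCommGroup E] [NormedSpace ℝ E] {K L : Set E} {x q : E}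

theorem forall_le_of_forall_interior_le {S : Set E} (hS : Convex ℝ S) (hSi : (interior S).Nonempty)
    (f : StrongDual ℝ E) {r : ℝ} (hf : ∀ y ∈ interior S, f y ≤ r) : ∀ y ∈ S, f y ≤ r := by
  intro y hy
  refine closure_minimal hf (isClosed_le f.continuous continuous_const) ?_
  rw [hS.closure_interior_eq_closure_of_nonempty_interior hSi]
  exact subset_closure hy

-- Separate the open convex set `interior K + interior L` from the point `q + q`.
theorem exists_common_support_of_not_transverseAt (hK : Convex ℝ K) (hL : Convex ℝ L)
    (hKi : (interior K).Nonempty) (hLi : (interior L).Nonempty) (hqK : q ∈ K) (hqL : q ∈ L)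
    (hq : ¬ TransverseAt K L q) :
    ∃ f : StrongDual ℝ E, f ≠ 0 ∧ (∀ y ∈ K, f y ≤ f q) ∧ ∀ y ∈ L, f y ≤ f q := by
  have hqq : q + q ∉ interior K + interior L := by
    rintro ⟨k, hk, l, hl, hkl⟩
    exact hq ⟨k - q, by simpa using hk, by rwa [← sub_add, sub_add_eq_add_sub, ← hkl,
      add_sub_cancel_left]⟩
  obtain ⟨f, hf⟩ := geometric_hahn_banach_open_point (hK.interior.add hL.interior)
    isOpen_interior.add_right hqq
  have hf_add : ∀ k ∈ K, ∀ l ∈ L, f k + f l ≤ f q + f q := fun k hk l hl => by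
    rw [← le_sub_iff_add_le]
    refine forall_le_of_forall_interior_le hK hKi f (fun k' hk' => ?_) k hk
    rw [le_sub_comm]
    refine forall_le_of_forall_interior_le hL hLi f (fun l' hl' => ?_) l hl
    rw [le_sub_iff_add_le', ← map_add, ← map_add]
    exact (hf _ (add_mem_add hk' hl')).le
  refine ⟨f, ?_, fun k hk => le_of_add_le_add_right (hf_add k hk q hqL),
    fun l hl => le_of_add_le_add_left (hf_add q hqK l hl)⟩
  rintro rfl
  obtain ⟨k, hk⟩ := hKi
  obtain ⟨l, hl⟩ := hLi
  simpa using hf _ (add_mem_add hk hl)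

theorem eq_of_isMaxOn_of_strictConvex (hK : StrictConvex ℝ K) {f : StrongDual ℝ E} (hf : f ≠ 0)
    {y z : E} (hy : y ∈ K) (hz : z ∈ K) (hfy : IsMaxOn f K y) (hfz : IsMaxOn f K z) : y = z := by
  by_contra hyz
  have hmid := hK hy hz hyz one_half_pos one_half_pos (add_halves 1)
  have hmax : IsMaxOn f K ((1 / 2 : ℝ) • y + (1 / 2 : ℝ) • z) := fun w hw => by
    have hwy : f w ≤ f y := hfy hw
    have hwz : f w ≤ f z := hfz hw
    simp only [mem_ofPred_eq, map_add, map_smul, smul_eq_mul]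
    linarith
  exact hf ((hmax.isLocalMax (mem_interior_iff_mem_nhds.1 hmid)).hasFDerivAt_eq_zero f.hasFDerivAt)

-- A common supporting functional at `q = x + τ • k` is maximised over `K` at both `q` and `k`.
theorem transverseAt_vadd_smul_of_strictConvex (hK : StrictConvex ℝ K)
    (hKi : (interior K).Nonempty) {τ : ℝ} (hτ : 0 < τ) (hqK : q ∈ K) (hqL : q ∈ x +ᵥ τ • K)
    (hx : x ≠ (1 - τ) • q) : TransverseAt K (x +ᵥ τ • K) q := by
  have hLi : (interior (x +ᵥ τ • K)).Nonempty := by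
    rw [interior_vadd, interior_smul₀ hτ.ne']
    exact hKi.smul_set.vadd_set
  by_contra hq
  obtain ⟨f, hf, hfK, hfL⟩ := exists_common_support_of_not_transverseAt hK.convex
    ((hK.convex.smul τ).vadd x) hKi hLi hqK hqL hq
  obtain ⟨_, ⟨k, hk, rfl⟩, hkq : x + τ • k = q⟩ := hqL
  have hfk : IsMaxOn f K k := fun z hz => by
    have hzq : f (x + τ • z) ≤ f (x + τ • k) :=
      hkq ▸ hfL _ (vadd_mem_vadd_set (smul_mem_smul_set hz))
    simpa [hτ] using hzq
  obtain rfl := eq_of_isMaxOn_of_strictConvex hK hf hk hqK hfk hfK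
  exact hx (by rw [sub_smul, one_smul, eq_sub_iff_add_eq, hkq])

end CommonSupport

section SuperlevelSupport

variable {E : Type*} [NormedAddCommGroup E] [NormedSpace ℝ E] [MeasurableSpace E] [BorelSpace E]
  {μ : Measure E} {K L : Set E} {x y : E} {δ : ℝ≥0∞}

-- Were `g u < 0`, the covariogram would be below `δ` at `x - h • u` and drop linearly in `h` at
-- `x + h • u`, while its second difference along `u` is at least `-o(h)`.
theorem map_nonneg_of_superlevel_support [μ.IsAddLeftInvariant] (hK : MeasurableSet K)
    (hL : MeasurableSet L) (hcov : LogConcave (covariogram μ K L))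
    (hexit : ∀ u, NegligibleCommonExit μ K (x +ᵥ L) u K) (hδ : δ ≠ 0)
    (hx : covariogram μ K L x = δ) (hy : δ < covariogram μ K L y) {f g : E →ₗ[ℝ] ℝ}
    (hf : ∀ z, δ ≤ covariogram μ K L z → f z ≤ f x)
    (hg : ∀ z, δ ≤ covariogram μ K L z → g z ≤ g x) {u : E} (hu : 0 < f u) : 0 ≤ g u := by
  obtain ⟨c, hc, hdrop⟩ := hcov.exists_eventually_add_le hδ hy hf hu
  have hc₂ : c / 2 ≠ 0 := by simpa using hc
  obtain ⟨h, hdrop, hexit₁, hexit₂, hh : 0 < h⟩ := (hdrop.and ((hexit u _ hc₂).and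
    ((hexit (-u) _ hc₂).and self_mem_nhdsWithin))).exists
  have commonExit_inter (v : E) : commonExit K (x +ᵥ L) v ∩ K = commonExit K (x +ᵥ L) v :=
    inter_eq_left.2 fun z hz => hz.1.1
  rw [commonExit_inter] at hexit₁ hexit₂
  rw [smul_neg] at hexit₂
  have hsecond : δ + δ ≤ δ + covariogram μ K L (x - h • u) :=
    calc δ + δ ≤ covariogram μ K L (x + h • u) + covariogram μ K L (x - h • u) +
          (ENNReal.ofReal h * (c / 2) + ENNReal.ofReal h * (c / 2)) := by
          rw [← two_mul, ← hx]
          exact (two_mul_covariogram_le hK hL x (h • u)).trans (by gcongr)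
      _ = covariogram μ K L (x + h • u) + ENNReal.ofReal h * c +
          covariogram μ K L (x - h • u) := by
          rw [← mul_add, ENNReal.add_halves, add_right_comm]
      _ ≤ δ + covariogram μ K L (x - h • u) := by gcongr
  have hgx : g (x - h • u) ≤ g x := hg _ (ENNReal.le_of_add_le_add_left hy.ne_top hsecond)
  simpa [hh] using hgx

variable [FiniteDimensional ℝ E] [μ.IsAddHaarMeasure]

theorem interior_nonempty_of_measure_ne_zero {S : Set E} (hS : Convex ℝ S) (hμS : μ S ≠ 0) :
    (interior S).Nonempty := by
  contrapose! hμS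
  refine measure_mono_null (subset_closure.trans ?_) (hS.addHaar_frontier μ)
  rw [frontier, hμS, sdiff_empty]

theorem negligibleCommonExit_vadd_smul_of_strictConvex (hK : IsCompact K)
    (hKi : (interior K).Nonempty) (hKs : StrictConvex ℝ K) {τ : ℝ} (hτ : 0 < τ)
    (hx₀ : covariogram μ K (τ • K) x ≠ 0)
    (hx : covariogram μ K (τ • K) x <
      ENNReal.ofReal (min 1 (τ ^ Module.finrank ℝ E)) * μ K) (u : E) :
    NegligibleCommonExit μ K (x +ᵥ τ • K) u K := by
  have hL : IsClosed (x +ᵥ τ • K) := (hK.smul τ).isClosed.vadd x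
  have hLc : Convex ℝ (x +ᵥ τ • K) := (hKs.convex.smul τ).vadd x
  refine negligibleCommonExit_of_transverseAt hK hL hKs.convex hLc
    (interior_nonempty_of_measure_ne_zero (hKs.convex.inter hLc) hx₀) (fun q hq => ?_) u
  refine transverseAt_vadd_smul_of_strictConvex hKs hKi hτ (hK.isClosed.frontier_subset hq.1)
    (hL.frontier_subset hq.2) ?_
  rintro rfl
  exact hx.not_ge
    (min_one_pow_mul_measure_le_covariogram hKs.convex hτ (hK.isClosed.frontier_subset hq.1))

end SuperlevelSupport

section ConvolutionBody

variable {E : Type*} [NormedAddCommGroup E] [NormedSpace ℝ E] [MeasurableSpace E] (μ : Measure E)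
  {K : Set E} {τ : ℝ} {δ : ℝ≥0∞}

/-- The convolution body `K(δ,τ)` of `K`, for volumes measured by `μ`. -/
def convolutionBody (K : Set E) (τ : ℝ) (δ : ℝ≥0∞) : Set E := {x | δ ≤ covariogram μ K (τ • K) x}

theorem convolutionBody_eq (K : Set E) (τ : ℝ) (δ : ℝ≥0∞) :
    convolutionBody μ K τ δ = {x | δ ≤ μ (K ∩ (fun z => x + τ • z) '' K)} := by
  simp only [convolutionBody, covariogram, ← image_vadd, ← image_smul, image_image, vadd_eq_add]

variable {μ} [BorelSpace E] [FiniteDimensional ℝ E] [μ.IsAddHaarMeasure]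

theorem convex_convolutionBody (hK : IsCompact K) (hKc : Convex ℝ K) :
    Convex ℝ (convolutionBody μ K τ δ) :=
  (logConcave_covariogram hK.measurableSet (hK.smul τ).measurableSet hKc
    (hKc.smul τ)).convex_superlevel δ

theorem continuous_covariogram_smul (hK : IsCompact K) : Continuous (covariogram μ K (τ • K)) :=
  continuous_covariogram (hK.smul τ).measurableSet (hK.smul τ).measure_lt_top.ne

theorem nonempty_interior_convolutionBody (hK : IsCompact K) (hKc : Convex ℝ K) (hτ : 0 < τ)
    (hK₀ : K.Nonempty) (hδ : δ < ENNReal.ofReal (min 1 (τ ^ Module.finrank ℝ E)) * μ K) :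
    (interior (convolutionBody μ K τ δ)).Nonempty := by
  obtain ⟨k, hk⟩ := hK₀
  refine ⟨(1 - τ) • k, interior_maximal (fun z hz => le_of_lt hz)
    (isOpen_lt continuous_const (continuous_covariogram_smul hK)) ?_⟩
  exact hδ.trans_le (min_one_pow_mul_measure_le_covariogram hKc hτ hk)

theorem covariogram_eq_of_mem_frontier_convolutionBody (hK : IsCompact K) {x : E}
    (hx : x ∈ frontier (convolutionBody μ K τ δ)) : covariogram μ K (τ • K) x = δ :=
  (frontier_le_subset_eq continuous_const (continuous_covariogram_smul hK) hx).symm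

end ConvolutionBody

section UnitOuterNormal

variable {E : Type*} [NormedAddCommGroup E] [InnerProductSpace ℝ E] {S : Set E} {x v : E}

/-- `v` is a unit outer normal of `S` at `x`: a unit vector whose orthogonal hyperplane through `x`
supports `S`. The point `x` need not belong to `S`. -/
def IsUnitOuterNormal (S : Set E) (x v : E) : Prop := ‖v‖ = 1 ∧ ∀ z ∈ S, ⟪z, v⟫ ≤ ⟪x, v⟫

theorem eq_of_norm_eq_one_of_forall_inner_nonneg {v w : E} (hv : ‖v‖ = 1) (hw : ‖w‖ = 1)
    (hvw : ∀ u, 0 < ⟪u, v⟫ → 0 ≤ ⟪u, w⟫) : v = w := by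
  by_contra hne
  have hlt : ⟪v, w⟫ < 1 := (inner_lt_one_iff_real_of_norm_eq_one hv hw).2 hne
  have hw_nonneg := hvw (v - w) (by
    rw [inner_sub_left, real_inner_self_eq_norm_sq, hv, real_inner_comm]
    linarith)
  rw [inner_sub_left, real_inner_self_eq_norm_sq, hw] at hw_nonneg
  linarith

theorem exists_isUnitOuterNormal [CompleteSpace E] (hS : Convex ℝ S) (hSi : (interior S).Nonempty)
    (hx : x ∉ interior S) : ∃ v, IsUnitOuterNormal S x v := by
  obtain ⟨f, hf⟩ := geometric_hahn_banach_open_point hS.interior isOpen_interior hx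
  have hfS := forall_le_of_forall_interior_le hS hSi f fun y hy => (hf y hy).le
  obtain ⟨v, rfl⟩ := (InnerProductSpace.toDual ℝ E).surjective f
  have hv : v ≠ 0 := by
    rintro rfl
    obtain ⟨y, hy⟩ := hSi
    simpa using hf y hy
  refine ⟨‖v‖⁻¹ • v, norm_smul_inv_norm hv, fun z hz => ?_⟩
  rw [real_inner_smul_right, real_inner_smul_right, real_inner_comm, real_inner_comm v x]
  exact mul_le_mul_of_nonneg_left (hfS z hz) (by positivity)

theorem continuousOn_of_isUnitOuterNormal_unique [FiniteDimensional ℝ E] {N : E → E} {F : Set E}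
    (hN : ∀ x ∈ F, IsUnitOuterNormal S x (N x))
    (hunique : ∀ x ∈ F, ∀ v, IsUnitOuterNormal S x v → v = N x) : ContinuousOn N F := by
  intro x hx
  refine (isCompact_sphere (0 : E) 1).tendsto_nhds_of_unique_mapClusterPt ?_ fun v hv hcluster => ?_
  · filter_upwards [self_mem_nhdsWithin] with y hy
    simpa using (hN y hy).1
  · obtain ⟨U, hU, hUv⟩ := mapClusterPt_iff_ultrafilter.1 hcluster
    refine hunique x hx v ⟨by simpa using hv, fun z hz => ?_⟩
    refine le_of_tendsto_of_tendsto (tendsto_const_nhds.inner hUv)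
      (Tendsto.inner (hU.trans nhdsWithin_le_nhds : Tendsto id (U : Filter E) (𝓝 x)) hUv) ?_
    filter_upwards [hU self_mem_nhdsWithin] with y hy
    exact (hN y hy).2 z hz

theorem exists_continuousOn_isUnitOuterNormal [FiniteDimensional ℝ E] (hS : Convex ℝ S)
    (hSi : (interior S).Nonempty)
    (hunique : ∀ x ∈ frontier S, ∀ v w,
      IsUnitOuterNormal S x v → IsUnitOuterNormal S x w → v = w) :
    ∃ N : E → E, ContinuousOn N (frontier S) ∧
      ∀ x ∈ frontier S, IsUnitOuterNormal S x (N x) ∧ ∀ v, IsUnitOuterNormal S x v → v = N x := by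
  choose! N hN using fun x (hx : x ∈ frontier S) => exists_isUnitOuterNormal hS hSi hx.2
  have hN_unique (x) (hx : x ∈ frontier S) (v) (hv : IsUnitOuterNormal S x v) : v = N x :=
    hunique x hx v (N x) hv (hN x hx)
  exact ⟨N, continuousOn_of_isUnitOuterNormal_unique hN hN_unique,
    fun x hx => ⟨hN x hx, hN_unique x hx⟩⟩

variable [FiniteDimensional ℝ E] [MeasurableSpace E] [BorelSpace E] {μ : Measure E}
  [μ.IsAddHaarMeasure] {K : Set E} {τ : ℝ} {δ : ℝ≥0∞}

theorem isUnitOuterNormal_convolutionBody_unique (hK : IsCompact K) (hKi : (interior K).Nonempty)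
    (hKs : StrictConvex ℝ K) (hτ : 0 < τ) (hδ₀ : δ ≠ 0)
    (hδ : δ < ENNReal.ofReal (min 1 (τ ^ Module.finrank ℝ E)) * μ K) {w : E}
    (hx : x ∈ frontier (convolutionBody μ K τ δ))
    (hv : IsUnitOuterNormal (convolutionBody μ K τ δ) x v)
    (hw : IsUnitOuterNormal (convolutionBody μ K τ δ) x w) : v = w := by
  have hτK : MeasurableSet (τ • K) := (hK.smul τ).measurableSet
  have hcov := covariogram_eq_of_mem_frontier_convolutionBody hK hx
  obtain ⟨k, hk⟩ := hKi.mono interior_subset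
  refine eq_of_norm_eq_one_of_forall_inner_nonneg hv.1 hw.1 fun u hu => ?_
  rw [real_inner_comm] at hu ⊢
  exact map_nonneg_of_superlevel_support (f := innerₗ E v) (g := innerₗ E w)
    hK.measurableSet hτK
    (logConcave_covariogram hK.measurableSet hτK hKs.convex (hKs.convex.smul τ))
    (negligibleCommonExit_vadd_smul_of_strictConvex hK hKi hKs hτ (hcov ▸ hδ₀) (hcov ▸ hδ)) hδ₀
    hcov (hδ.trans_le (min_one_pow_mul_measure_le_covariogram hKs.convex hτ hk))
    (fun z hz => by simpa [real_inner_comm] using hv.2 z hz)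
    (fun z hz => by simpa [real_inner_comm] using hw.2 z hz) hu

variable (μ)

theorem stmt_7_general (hK : IsCompact K) (hKi : (interior K).Nonempty) (hKs : StrictConvex ℝ K)
    (hτ : 0 < τ) (hδ₀ : δ ≠ 0)
    (hδ : δ < ENNReal.ofReal (min 1 (τ ^ Module.finrank ℝ E)) * μ K) :
    ∃ N : E → E, ContinuousOn N (frontier (convolutionBody μ K τ δ)) ∧
      ∀ x ∈ frontier (convolutionBody μ K τ δ),
        IsUnitOuterNormal (convolutionBody μ K τ δ) x (N x) ∧
        ∀ v, IsUnitOuterNormal (convolutionBody μ K τ δ) x v → v = N x :=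
  exists_continuousOn_isUnitOuterNormal (convex_convolutionBody hK hKs.convex)
    (nonempty_interior_convolutionBody hK hKs.convex hτ (hKi.mono interior_subset) hδ)
    fun _ hx _ _ => isUnitOuterNormal_convolutionBody_unique hK hKi hKs hτ hδ₀ hδ hx

end UnitOuterNormal

/-- For a strictly convex body `K`, the boundary of the convolution body `K(δ,τ)` is `C¹`:
each boundary point has a unique (unit outer normal of a) supporting hyperplane, and these
normals vary continuously. -/
theorem stmt_7 (n : ℕ) (K : Set (EuclideanSpace ℝ (Fin n)))
    (hKcomp : IsCompact K) (hKconv : Convex ℝ K) (hKint : (interior K).Nonempty)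
    (hKstrict : StrictConvex ℝ K)
    (τ : ℝ) (hτ : 0 < τ)
    (δ : ENNReal) (hδ0 : 0 < δ)
    (hδ : δ < ENNReal.ofReal (min 1 (τ ^ n)) * volume K) :
    ∃ N : EuclideanSpace ℝ (Fin n) → EuclideanSpace ℝ (Fin n),
      ContinuousOn N
        (frontier {x : EuclideanSpace ℝ (Fin n) |
          δ ≤ volume (K ∩ (fun z => x + τ • z) '' K)}) ∧
      ∀ x ∈ frontier {x : EuclideanSpace ℝ (Fin n) |
          δ ≤ volume (K ∩ (fun z => x + τ • z) '' K)},
        (‖N x‖ = 1 ∧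
          ∀ z, δ ≤ volume (K ∩ (fun w => z + τ • w) '' K) → ⟪z, N x⟫ ≤ ⟪x, N x⟫) ∧
        ∀ v : EuclideanSpace ℝ (Fin n), ‖v‖ = 1 →
          (∀ z, δ ≤ volume (K ∩ (fun w => z + τ • w) '' K) → ⟪z, v⟫ ≤ ⟪x, v⟫) →
          v = N x := by
  simpa only [IsUnitOuterNormal, convolutionBody_eq, mem_ofPred_eq, and_imp] using
    stmt_7_general volume hKcomp hKint hKstrict hτ hδ0.ne' (by simpa using hδ)
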